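/- arXiv:2212.14839 — 2 statements merged into one kernel-verified Lean document; each statement's English description precedes it below -/
import Mathlib

section
/- Let H' ⊂ ℝ² be a centrally symmetric convex hexagon or a parallelogram. Then there exists a full-rank lattice Λ ⊂ ℝ² with covol(Λ) = |H'| such that the translates {H' + λ : λ ∈ Λ} have pairwise disjoint interiors and cover all of ℝ². (Equivalently, δ_L(H') = 1: every centrally symmetric hexagon or parallelogram tiles the plane by a lattice.) -/
open MeasureTheory Pointwise

/-- The covolume of the full-rank lattice generated by the columns of `M`. -/
noncomputable def covol {n : ℕ} (M : Matrix (Fin n) (Fin n) ℝ) : ℝ := |M.det|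

/-- The set of points of the lattice generated by the columns of `M`. -/
def latticePoints {n : ℕ} (M : Matrix (Fin n) (Fin n) ℝ) : Set (Fin n → ℝ) :=
  {v | ∃ z : Fin n → ℤ, v = M.mulVec (fun i => (z i : ℝ))}

/-- `H` is a centrally symmetric convex hexagon: the convex hull of six points
`A₁, …, A₆` with `A_{i+3} = -A_i`, not contained in a line. -/
def IsSymmHexagon (H : Set (Fin 2 → ℝ)) : Prop :=
  ∃ A : Fin 3 → (Fin 2 → ℝ),
    H = convexHull ℝ {A 0, A 1, A 2, -A 0, -A 1, -A 2} ∧ ¬ Collinear ℝ H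

/-- `H` is a parallelogram: the convex hull of four points `B, B', -B, -B'`,
not contained in a line. -/
def IsParallelogram (H : Set (Fin 2 → ℝ)) : Prop :=
  ∃ B B' : Fin 2 → ℝ,
    H = convexHull ℝ {B, B', -B, -B'} ∧ ¬ Collinear ℝ H

/-!
Let `p`, `q`, `r` be points of the plane with a nontrivial relation `α p + β q + γ r = 0`; after
changing signs, the coefficients are nonnegative. If they satisfy the triangle inequalities, then
the hull of `±p`, `±q`, `±r` is the zonotope generated by `q + r`, `r + p`, `p + q`, between which
there is a relation with the nonnegative coefficients `β + γ - α`, `γ + α - β`, `α + β - γ`. If,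
say, `α > β + γ`, then `p` lies in the hull of `±q`, `±r` and may be replaced by `p' = -q`, for
which the relation `p' + q = 0` does satisfy the triangle inequalities.

Such a zonotope is the projection of a unit cube along a line with direction `w ≥ 0`. A line with
this direction meets the integer translates of the cube in a stack along which the coordinate sum
of the translation vector increases one by one. It therefore meets a cube with coordinate sum zero,
and the interior of at most one. Projecting, the zonotope tiles the plane by the images of the
integer vectors with coordinate sum zero; being a fundamental domain up to a null set, it has the
covolume of this lattice as its area.
-/

open Module Submodule Set Topology

/-! ### Lattice tilings by convex sets -/

section Tiling

/-- The translates of `K` by the points of `Λ` tile the ambient space: their interiors are pairwise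
disjoint and they cover everything. -/
structure IsTiling {E : Type*} [AddCommGroup E] [TopologicalSpace E] (Λ K : Set E) : Prop where
  disjoint_interior : ∀ l ∈ Λ, ∀ l' ∈ Λ, l ≠ l' → Disjoint (interior (l +ᵥ K)) (interior (l' +ᵥ K))
  iUnion_vadd : ⋃ l ∈ Λ, l +ᵥ K = univ

variable {E : Type*} [NormedAddCommGroup E] [NormedSpace ℝ E] [FiniteDimensional ℝ E]
  [MeasurableSpace E] [BorelSpace E] {μ : Measure E} [μ.IsAddHaarMeasure]

lemma aedisjoint_of_disjoint_interior {s t : Set E} (hs : Convex ℝ s) (ht : Convex ℝ t)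
    (hst : Disjoint (interior s) (interior t)) : AEDisjoint μ s t := by
  refine measure_mono_null (fun p ⟨hps, hpt⟩ => ?_)
    (measure_union_null (hs.addHaar_frontier μ) (ht.addHaar_frontier μ))
  by_cases hp : p ∈ interior s
  · exact Or.inr ⟨subset_closure hpt, hst.notMem_of_mem_left hp⟩
  · exact Or.inl ⟨subset_closure hps, hp⟩

lemma IsTiling.isAddFundamentalDomain {L : AddSubgroup E} {K : Set E}
    (h : IsTiling (L : Set E) K) (hK : Convex ℝ K) : IsAddFundamentalDomain L K μ where
  nullMeasurableSet := hK.nullMeasurableSet μ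
  ae_covers := by
    refine .of_forall fun p => ?_
    obtain ⟨l, hl, hp⟩ := mem_iUnion₂.mp (h.iUnion_vadd.symm ▸ mem_univ p)
    exact ⟨-⟨l, hl⟩, mem_vadd_set_iff_neg_vadd_mem.mp hp⟩
  aedisjoint l l' hne :=
    aedisjoint_of_disjoint_interior (hK.vadd (l : E)) (hK.vadd (l' : E))
      (h.disjoint_interior l l.2 l' l'.2 (Subtype.coe_ne_coe.mpr hne))

lemma latticePoints_eq_span {n : ℕ} (M : Matrix (Fin n) (Fin n) ℝ) :
    latticePoints M = span ℤ (range M.col) := by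
  ext v
  simp only [latticePoints, SetLike.mem_coe, mem_span_range_iff_exists_fun, mem_ofPred_eq,
    Matrix.mulVec_eq_sum, op_smul_eq_smul, ← Int.cast_smul_eq_zsmul ℝ]
  exact exists_congr fun z => eq_comm

lemma volume_eq_covol_of_isTiling {n : ℕ} {M : Matrix (Fin n) (Fin n) ℝ} (hM : M.det ≠ 0)
    {K : Set (Fin n → ℝ)} (hK : Convex ℝ K) (h : IsTiling (latticePoints M) K) :
    volume K = ENNReal.ofReal (covol M) := by
  classical
  have hcol : LinearIndependent ℝ M.col :=
    Matrix.linearIndependent_cols_iff_isUnit.mpr ((M.isUnit_iff_isUnit_det).mpr hM.isUnit)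
  let b := basisOfPiSpaceOfLinearIndependent hcol
  have hb : ⇑b = M.col := coe_basisOfPiSpaceOfLinearIndependent hcol
  rw [latticePoints_eq_span, ← hb] at h
  have hfd : IsAddFundamentalDomain (span ℤ (range b)).toAddSubgroup K volume :=
    h.isAddFundamentalDomain hK
  have : Countable (span ℤ (range b)).toAddSubgroup :=
    inferInstanceAs (Countable (span ℤ (range b)))
  have hdet : (Matrix.of b).det = M.det := by
    rw [hb, ← Matrix.det_transpose M]
    rfl
  rw [hfd.measure_eq (ZSpan.isAddFundamentalDomain' b volume), ZSpan.volume_fundamentalDomain,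
    hdet, covol]

end Tiling

/-! ### The stack of unit cubes met by a line -/

section Cubes

variable {ι : Type*} [Fintype ι] {w : ι → ℝ}

lemma exists_cube_succ (hw : 0 < w) {x : ι → ℝ} {m : ι → ℤ} (hx : ∀ i, |x i - m i| ≤ 1 / 2) :
    ∃ (τ : ℝ) (m' : ι → ℤ), ∑ i, m' i = ∑ i, m i + 1 ∧
      ∀ i, |x i + τ * w i - m' i| ≤ 1 / 2 := by
  classical
  obtain ⟨hw0, j, hj⟩ := Pi.lt_def.mp hw
  -- The line leaves the cube through the facet it reaches first.
  obtain ⟨k, hk, hmin⟩ := (Finset.univ.filter fun i => 0 < w i).exists_min_image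
    (fun i => (m i + 1 / 2 - x i) / w i) ⟨j, by simpa using hj⟩
  simp only [Finset.mem_filter_univ] at hk hmin
  set τ := (m k + 1 / 2 - x k) / w k with hτ
  have hτ0 : 0 ≤ τ := div_nonneg (by linarith [(abs_le.mp (hx k)).2]) hk.le
  have hexit : τ * w k = m k + 1 / 2 - x k := div_mul_cancel₀ _ hk.ne'
  have hstay (i) : |x i + τ * w i - m i| ≤ 1 / 2 := by
    obtain ⟨hlow, hup⟩ := abs_le.mp (hx i)
    have hshift : 0 ≤ τ * w i := mul_nonneg hτ0 (hw0 i)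
    refine abs_le.mpr ⟨by linarith, ?_⟩
    rcases (hw0 i).eq_or_lt with hi | hi
    · simp only [Pi.zero_apply] at hi
      simpa [← hi] using hup
    · linarith [(le_div_iff₀ hi).mp (hmin i hi)]
  refine ⟨τ, m + Pi.single k 1, by simp [Finset.sum_add_distrib], fun i => ?_⟩
  rcases eq_or_ne i k with rfl | hik
  · simp only [Pi.add_apply, Pi.single_eq_same, Int.cast_add, Int.cast_one]
    exact abs_le.mpr ⟨by linarith, by linarith⟩
  · simpa [hik] using hstay i

lemma exists_cube_pred (hw : 0 < w) {x : ι → ℝ} {m : ι → ℤ} (hx : ∀ i, |x i - m i| ≤ 1 / 2) :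
    ∃ (τ : ℝ) (m' : ι → ℤ), ∑ i, m' i = ∑ i, m i - 1 ∧
      ∀ i, |x i + τ * w i - m' i| ≤ 1 / 2 := by
  obtain ⟨τ, m', hm', hx'⟩ := exists_cube_succ (x := -x) (m := -m) hw fun i => by
    rw [← abs_neg]
    simpa [add_comm, sub_eq_add_neg] using hx i
  refine ⟨-τ, -m', ?_, fun i => ?_⟩
  · simp only [Pi.neg_apply, Finset.sum_neg_distrib] at hm' ⊢
    omega
  · rw [← abs_neg]
    convert hx' i using 2
    simp only [Pi.neg_apply, Int.cast_neg]
    ring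

lemma exists_cube_of_sum_eq (hw : 0 < w) (x : ι → ℝ) (N : ℤ) :
    ∃ (τ : ℝ) (m : ι → ℤ), ∑ i, m i = N ∧ ∀ i, |x i + τ * w i - m i| ≤ 1 / 2 := by
  induction N using Int.inductionOn' (b := ∑ i, round (x i)) with
  | zero => exact ⟨0, fun i => round (x i), rfl, fun i => by simpa using abs_sub_round (x i)⟩
  | succ k _ ih =>
    obtain ⟨τ, m, rfl, hm⟩ := ih
    obtain ⟨τ', m', hm', hx'⟩ := exists_cube_succ (x := fun i => x i + τ * w i) hw hm
    exact ⟨τ + τ', m', hm', fun i => by simpa only [add_mul, add_assoc] using hx' i⟩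
  | pred k _ ih =>
    obtain ⟨τ, m, rfl, hm⟩ := ih
    obtain ⟨τ', m', hm', hx'⟩ := exists_cube_pred (x := fun i => x i + τ * w i) hw hm
    exact ⟨τ + τ', m', hm', fun i => by simpa only [add_mul, add_assoc] using hx' i⟩

lemma eq_of_mem_open_cubes (hw : 0 ≤ w) {x : ι → ℝ} {τ : ℝ} {m m' : ι → ℤ}
    (hx : ∀ i, |x i - m i| < 1 / 2) (hx' : ∀ i, |x i + τ * w i - m' i| < 1 / 2)
    (hsum : ∑ i, m i = ∑ i, m' i) : m = m' := by
  wlog hτ : 0 ≤ τ generalizing x τ m m'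
  · refine (this (x := fun i => x i + τ * w i) (τ := -τ) hx' (fun i => ?_) hsum.symm
      (by linarith)).symm
    simpa using hx i
  have hle (i) : m i ≤ m' i := by
    have hshift : 0 ≤ τ * w i := mul_nonneg hτ (hw i)
    have : (m i : ℝ) < m' i + 1 := by
      linarith [(abs_lt.mp (hx i)).1, (abs_lt.mp (hx' i)).2]
    exact Int.lt_add_one_iff.mp (by exact_mod_cast this)
  exact funext fun i => (Finset.sum_eq_sum_iff_of_le fun i _ => hle i).mp hsum i (Finset.mem_univ i)

end Cubes

/-! ### Zonotopes -/

section Zonotope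

variable {ι V : Type*} [Fintype ι] [AddCommGroup V] [Module ℝ V] {a : ι → V} {w : ι → ℝ}

/-- The zonotope generated by `a`, centred at the origin: the image of the unit cube
`[-1/2, 1/2]^ι` under `s ↦ ∑ i, s i • a i`. -/
def zonotope (a : ι → V) : Set V :=
  Fintype.linearCombination ℝ a '' univ.pi fun _ => Icc (-(1 / 2)) (1 / 2)

/-- The integer combinations of `a` with coefficient sum zero; when the only linear relation
between the `a i` (up to scaling) has nonnegative coefficients, this is the lattice by which
`zonotope a` tiles. -/
def zeroSumLattice (a : ι → V) : Set V :=
  {v | ∃ m : ι → ℤ, ∑ i, m i = 0 ∧ ∑ i, (m i : ℝ) • a i = v}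

lemma mem_zonotope {v : V} :
    v ∈ zonotope a ↔ ∃ s : ι → ℝ, (∀ i, |s i| ≤ 1 / 2) ∧ ∑ i, s i • a i = v := by
  simp only [zonotope, mem_image, mem_univ_pi, mem_Icc, abs_le, Fintype.linearCombination_apply]

lemma absConvex_zonotope (a : ι → V) : AbsConvex ℝ (zonotope a) := by
  refine ⟨balanced_iff_smul_mem.mpr fun {r} hr v hv => ?_,
    (convex_pi fun _ _ => convex_Icc _ _).linear_image _⟩
  obtain ⟨s, hs, rfl⟩ := mem_zonotope.mp hv
  refine mem_zonotope.mpr ⟨r • s, fun i => ?_, by simp [Finset.smul_sum, mul_smul]⟩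
  simpa [abs_mul] using mul_le_mul hr (hs i) (abs_nonneg _) zero_le_one

lemma zonotope_subset_span (a : ι → V) : zonotope a ⊆ span ℝ (range a) := by
  rintro _ ⟨s, -, rfl⟩
  exact Fintype.range_linearCombination ℝ a ▸ LinearMap.mem_range_self _ s

lemma zonotope_eq_convexHull (a : ι → V) :
    zonotope a = convexHull ℝ
      (Fintype.linearCombination ℝ a '' univ.pi fun _ => {-(1 / 2), 1 / 2}) := by
  rw [zonotope, ← LinearMap.image_convexHull, convexHull_pi]
  simp only [convexHull_pair]
  rw [segment_eq_Icc (by norm_num)]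

variable [TopologicalSpace V] [ContinuousSMul ℝ V]

lemma exists_abs_lt_of_mem_interior_zonotope {v : V} (hv : v ∈ interior (zonotope a)) :
    ∃ s : ι → ℝ, (∀ i, |s i| < 1 / 2) ∧ ∑ i, s i • a i = v := by
  have hcont : ContinuousAt (fun t : ℝ => t • v) 1 := by fun_prop
  have hnear : ∀ᶠ t in 𝓝[>] (1 : ℝ), t • v ∈ zonotope a :=
    nhdsWithin_le_nhds (hcont (by simpa using mem_interior_iff_mem_nhds.mp hv))
  obtain ⟨t, ht, ht1 : 1 < t⟩ := (hnear.and self_mem_nhdsWithin).exists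
  obtain ⟨s, hs, hst⟩ := mem_zonotope.mp ht
  have ht0 : 0 < t := by linarith
  refine ⟨t⁻¹ • s, fun i => ?_, ?_⟩
  · calc |(t⁻¹ • s) i| = t⁻¹ * |s i| := by simp [abs_mul, abs_of_pos ht0]
      _ ≤ t⁻¹ * (1 / 2) := by gcongr; exact hs i
      _ < 1 / 2 := by linarith [inv_lt_one_of_one_lt₀ ht1]
  · simp only [Pi.smul_apply, smul_assoc, ← Finset.smul_sum, hst, inv_smul_smul₀ ht0.ne']

variable [IsTopologicalAddGroup V]

lemma disjoint_interior_vadd_zonotope (hw : 0 ≤ w)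
    (hker : LinearMap.ker (Fintype.linearCombination ℝ a) ≤ ℝ ∙ w) {m m' : ι → ℤ}
    (hsum : ∑ i, m i = ∑ i, m' i) (hne : m ≠ m') :
    Disjoint (interior ((∑ i, (m i : ℝ) • a i) +ᵥ zonotope a))
      (interior ((∑ i, (m' i : ℝ) • a i) +ᵥ zonotope a)) := by
  rw [Set.disjoint_left, interior_vadd, interior_vadd]
  rintro _ ⟨v, hv, rfl⟩ ⟨v', hv', heq⟩
  obtain ⟨s, hs, rfl⟩ := exists_abs_lt_of_mem_interior_zonotope hv
  obtain ⟨s', hs', rfl⟩ := exists_abs_lt_of_mem_interior_zonotope hv'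
  have hrel : (fun i => m' i + s' i - (m i + s i)) ∈
      LinearMap.ker (Fintype.linearCombination ℝ a) := by
    simpa [Fintype.linearCombination_apply, sub_smul, add_smul, Finset.sum_add_distrib,
      sub_eq_zero] using heq
  obtain ⟨τ, hτ⟩ := mem_span_singleton.mp (hker hrel)
  refine hne (eq_of_mem_open_cubes hw (x := fun i => m i + s i) (τ := τ) (fun i => ?_)
    (fun i => ?_) hsum)
  · simpa using hs i
  · have hi : τ * w i = m' i + s' i - (m i + s i) := congrFun hτ i
    simpa [hi] using hs' i

lemma isTiling_zeroSumLattice_zonotope (hw : 0 < w)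
    (hker : LinearMap.ker (Fintype.linearCombination ℝ a) = ℝ ∙ w)
    (hspan : span ℝ (range a) = ⊤) : IsTiling (zeroSumLattice a) (zonotope a) where
  disjoint_interior := by
    rintro _ ⟨m, hm, rfl⟩ _ ⟨m', hm', rfl⟩ hne
    exact disjoint_interior_vadd_zonotope hw.le hker.le (hm.trans hm'.symm)
      fun h => hne (by rw [h])
  iUnion_vadd := by
    refine eq_univ_of_forall fun v => ?_
    obtain ⟨x, rfl⟩ := mem_span_range_iff_exists_fun ℝ |>.mp (hspan ▸ mem_top : v ∈ _)
    obtain ⟨τ, m, hm, hx⟩ := exists_cube_of_sum_eq hw x 0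
    refine mem_iUnion₂.mpr
      ⟨_, ⟨m, hm, rfl⟩, mem_vadd_set.mpr ⟨_, mem_zonotope.mpr ⟨_, hx, rfl⟩, ?_⟩⟩
    have hrel : ∑ i, w i • a i = 0 := by
      simpa [Fintype.linearCombination_apply] using hker.ge (mem_span_singleton_self w)
    simp [sub_smul, add_smul, mul_smul, Finset.sum_add_distrib, ← Finset.smul_sum, hrel]

end Zonotope

section CoordinateZonotope

variable {n : ℕ} {a : Fin (n + 1) → Fin n → ℝ} {w : Fin (n + 1) → ℝ}

/-- The matrix with columns `a 1 - a 0, …, a n - a 0`, which generate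
`zeroSumLattice a`. -/
def differenceMatrix (a : Fin (n + 1) → Fin n → ℝ) : Matrix (Fin n) (Fin n) ℝ :=
  .of fun i j => a j.succ i - a 0 i

lemma differenceMatrix_col (a : Fin (n + 1) → Fin n → ℝ) (j : Fin n) :
    (differenceMatrix a).col j = a j.succ - a 0 := rfl

lemma latticePoints_differenceMatrix (a : Fin (n + 1) → Fin n → ℝ) :
    latticePoints (differenceMatrix a) = zeroSumLattice a := by
  have hmul (z : Fin n → ℤ) : (differenceMatrix a).mulVec (fun i => (z i : ℝ)) =
      ∑ j, (z j : ℝ) • (a j.succ - a 0) := by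
    simp only [Matrix.mulVec_eq_sum, op_smul_eq_smul]
    rfl
  ext v
  constructor
  · rintro ⟨z, rfl⟩
    refine ⟨Fin.cons (-∑ j, z j) z, by simp [Fin.sum_univ_succ], ?_⟩
    simp only [hmul, Fin.sum_univ_succ, Fin.cons_zero, Fin.cons_succ, smul_sub,
      Finset.sum_sub_distrib, ← Finset.sum_smul]
    push_cast
    module
  · rintro ⟨m, hm, rfl⟩
    refine ⟨fun j => m j.succ, ?_⟩
    have hm0 : (m 0 : ℝ) = -∑ j : Fin n, (m j.succ : ℝ) := by
      rw [Fin.sum_univ_succ, add_eq_zero_iff_eq_neg] at hm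
      exact_mod_cast hm
    simp only [hmul, Fin.sum_univ_succ, hm0, smul_sub, Finset.sum_sub_distrib, ← Finset.sum_smul]
    module

lemma det_differenceMatrix_ne_zero (hw : ∑ i, w i ≠ 0) (hrel : ∑ i, w i • a i = 0)
    (hspan : span ℝ (range a) = ⊤) : (differenceMatrix a).det ≠ 0 := by
  set D := span ℝ (range (differenceMatrix a).col)
  have hsub (i) : a i - a 0 ∈ D := by
    refine Fin.cases (by simp) (fun j => ?_) i
    exact subset_span ⟨j, differenceMatrix_col a j⟩
  have hzero : a 0 ∈ D := by
    refine (D.smul_mem_iff hw).mp ?_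
    have hmean : (∑ i, w i) • a 0 = -∑ i, w i • (a i - a 0) := by
      simp [smul_sub, Finset.sum_sub_distrib, hrel, Finset.sum_smul]
    rw [hmean]
    exact D.neg_mem (D.sum_mem fun i _ => D.smul_mem _ (hsub i))
  have hD : ⊤ ≤ D := by
    rw [← hspan, span_le]
    rintro _ ⟨i, rfl⟩
    simpa using D.add_mem (hsub i) hzero
  have hcol := linearIndependent_of_top_le_span_of_card_eq_finrank hD (by simp)
  exact ((Matrix.isUnit_iff_isUnit_det _).mp
    (Matrix.linearIndependent_cols_iff_isUnit.mp hcol)).ne_zero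

lemma ker_linearCombination_eq_span_singleton {ι V : Type*} [Fintype ι] [AddCommGroup V]
    [Module ℝ V] {a : ι → V} {w : ι → ℝ} (hcard : Fintype.card ι = finrank ℝ V + 1)
    (hw : w ≠ 0) (hrel : ∑ i, w i • a i = 0) (hspan : span ℝ (range a) = ⊤) :
    LinearMap.ker (Fintype.linearCombination ℝ a) = ℝ ∙ w := by
  symm
  refine Submodule.eq_of_le_of_finrank_eq ?_ ?_
  · simpa [span_singleton_le_iff_mem, Fintype.linearCombination_apply] using hrel
  · have hrank := (Fintype.linearCombination ℝ a).finrank_range_add_finrank_ker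
    rw [Fintype.range_linearCombination, hspan, finrank_top, finrank_fintype_fun_eq_card,
      hcard] at hrank
    rw [finrank_span_singleton hw]
    omega

theorem isTiling_zonotope (hw : 0 < w) (hrel : ∑ i, w i • a i = 0)
    (hspan : span ℝ (range a) = ⊤) :
    IsTiling (latticePoints (differenceMatrix a)) (zonotope a) := by
  rw [latticePoints_differenceMatrix]
  exact isTiling_zeroSumLattice_zonotope hw
    (ker_linearCombination_eq_span_singleton (by simp) hw.ne' hrel hspan) hspan

end CoordinateZonotope

/-! ### Symmetric hexagons as zonotopes -/

section Hexagon

variable {ι V : Type*} [AddCommGroup V] [Module ℝ V]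

lemma sum_smul_mem_of_absConvex {T : Set V} (hT : AbsConvex ℝ T) (hne : T.Nonempty)
    {A : ι → V} {c : ι → ℝ} {s : Finset ι} (hA : ∀ i ∈ s, A i ∈ T) (hc : ∑ i ∈ s, |c i| ≤ 1) :
    ∑ i ∈ s, c i • A i ∈ T := by
  classical
  have hscaled : ∀ t ⊆ s, ∑ i ∈ t, c i • A i ∈ (∑ i ∈ t, |c i|) • T := by
    intro t
    induction t using Finset.induction with
    | empty => simp [zero_smul_set hne]
    | insert i t hi ih =>
      intro hts
      rw [Finset.insert_subset_iff] at hts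
      rw [Finset.sum_insert hi, Finset.sum_insert hi,
        hT.2.add_smul (abs_nonneg _) (Finset.sum_nonneg fun _ _ => abs_nonneg _)]
      exact add_mem_add (hT.1.smul_mono (by simp) (smul_mem_smul_set (hA i hts.1))) (ih hts.2)
  obtain ⟨v, hv, hsum⟩ := hscaled s subset_rfl
  rw [← hsum]
  refine hT.1.smul_mem ?_ hv
  rwa [Real.norm_of_nonneg (Finset.sum_nonneg fun _ _ => abs_nonneg _)]

lemma mem_absConvexHull_range (A : ι → V) (i : ι) : A i ∈ absConvexHull ℝ (range A) :=
  subset_absConvexHull ⟨i, rfl⟩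

lemma absConvexHull_range_eq {A A' : ι → V} (h : ∀ i, A i ∈ absConvexHull ℝ (range A'))
    (h' : ∀ i, A' i ∈ absConvexHull ℝ (range A)) :
    absConvexHull ℝ (range A) = absConvexHull ℝ (range A') :=
  (absConvexHull_min (range_subset_iff.mpr h) absConvex_absConvexHull).antisymm
    (absConvexHull_min (range_subset_iff.mpr h') absConvex_absConvexHull)

variable [Fintype ι]

/-- No coefficient of the linear relation `g` between the points `A i` exceeds the sum of the
others; for three points these are the triangle inequalities which make the hull of the `±A i` a
zonotope. -/
structure IsBalancedRelation (A : ι → V) (g : ι → ℝ) : Prop where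
  sum_smul_eq_zero : ∑ i, g i • A i = 0
  two_mul_le_sum (i : ι) : 2 * g i ≤ ∑ j, g j
  sum_pos : 0 < ∑ i, g i

lemma exists_isBalancedRelation_of_two_mul_le {A : ι → V} {g : ι → ℝ} (hg : g ≠ 0)
    (hrel : ∑ i, g i • A i = 0) (htri : ∀ i, 2 * |g i| ≤ ∑ j, |g j|) :
    ∃ A' : ι → V, absConvexHull ℝ (range A) = absConvexHull ℝ (range A') ∧
      IsBalancedRelation A' fun i => |g i| := by
  let A' (i : ι) : V := if 0 ≤ g i then A i else -A i
  refine ⟨A', absConvexHull_range_eq (fun i => ?_) (fun i => ?_), ?_, htri, ?_⟩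
  · have h := mem_absConvexHull_range A' i
    by_cases hi : 0 ≤ g i
    · simpa [A', hi] using h
    · simpa [A', hi] using balanced_absConvexHull.neg_mem_iff.mpr h
  · by_cases hi : 0 ≤ g i
    · simpa [A', hi] using mem_absConvexHull_range A i
    · simpa [A', hi] using balanced_absConvexHull.neg_mem_iff.mpr (mem_absConvexHull_range A i)
  · rw [← hrel]
    refine Finset.sum_congr rfl fun i _ => ?_
    by_cases hi : 0 ≤ g i
    · simp [A', hi, abs_of_nonneg]
    · simp [A', hi, abs_of_neg (not_le.mp hi)]
  · obtain ⟨i, hi⟩ := Function.ne_iff.mp hg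
    exact Finset.sum_pos' (fun _ _ => abs_nonneg _) ⟨i, Finset.mem_univ i, abs_pos.mpr hi⟩

lemma mem_of_absConvex_of_sum_abs_le {T : Set V} (hT : AbsConvex ℝ T) (hne : T.Nonempty)
    {A : ι → V} {g : ι → ℝ} (hrel : ∑ i, g i • A i = 0) {k : ι} (hgk : g k ≠ 0)
    (hk : ∑ i, |g i| ≤ 2 * |g k|) (hA : ∀ i ≠ k, A i ∈ T) : A k ∈ T := by
  classical
  have hAk : A k = ∑ i ∈ Finset.univ.erase k, (-g i / g k) • A i := by
    rw [← Finset.add_sum_erase _ _ (Finset.mem_univ k)] at hrel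
    simp only [div_eq_inv_mul, mul_smul, ← Finset.smul_sum, neg_smul, Finset.sum_neg_distrib]
    rw [eq_inv_smul_iff₀ hgk]
    exact eq_neg_of_add_eq_zero_left hrel
  rw [hAk]
  refine sum_smul_mem_of_absConvex hT hne (fun i hi => hA i (Finset.ne_of_mem_erase hi)) ?_
  simp only [abs_div, abs_neg, ← Finset.sum_div]
  rw [← Finset.add_sum_erase _ _ (Finset.mem_univ k)] at hk
  rw [div_le_one (abs_pos.mpr hgk)]
  linarith

lemma exists_isBalancedRelation_of_sum_lt [Nontrivial ι] {A : ι → V} {g : ι → ℝ}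
    (hrel : ∑ i, g i • A i = 0) {k : ι} (hk : ∑ i, |g i| < 2 * |g k|) :
    ∃ (A' : ι → V) (g' : ι → ℝ), absConvexHull ℝ (range A) = absConvexHull ℝ (range A') ∧
      IsBalancedRelation A' g' := by
  classical
  obtain ⟨l, hlk⟩ := exists_ne k
  -- `A k` lies in the hull of the other points, so `-A l` may take its place.
  let A' := Function.update A k (-A l)
  have hA (i) (hi : i ≠ k) : A i ∈ absConvexHull ℝ (range A') := by
    simpa [A', hi] using mem_absConvexHull_range A' i
  have hgk : g k ≠ 0 := abs_pos.mp <| by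
    linarith [Finset.sum_nonneg fun i (_ : i ∈ Finset.univ) => abs_nonneg (g i)]
  have hAk : A k ∈ absConvexHull ℝ (range A') :=
    mem_of_absConvex_of_sum_abs_le absConvex_absConvexHull ⟨_, hA l hlk⟩ hrel hgk hk.le hA
  have hsum : ∑ i, (Pi.single k 1 + Pi.single l 1 : ι → ℝ) i = 2 := by
    simp [Finset.sum_add_distrib, one_add_one_eq_two]
  refine ⟨A', Pi.single k 1 + Pi.single l 1, absConvexHull_range_eq (fun i => ?_) (fun i => ?_),
    ?_, fun i => ?_, hsum ▸ two_pos⟩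
  · rcases eq_or_ne i k with rfl | hi
    exacts [hAk, hA i hi]
  · rcases eq_or_ne i k with rfl | hi
    · simpa [A'] using balanced_absConvexHull.neg_mem_iff.mpr (mem_absConvexHull_range A l)
    · simpa [A', hi] using mem_absConvexHull_range A i
  · simp [add_smul, Finset.sum_add_distrib, Pi.single_apply, ite_smul, A', hlk]
  · rw [hsum, Pi.add_apply, Pi.single_apply, Pi.single_apply]
    grind

lemma exists_isBalancedRelation [Nontrivial ι] {A : ι → V} (hA : ¬ LinearIndependent ℝ A) :
    ∃ (A' : ι → V) (g : ι → ℝ), absConvexHull ℝ (range A) = absConvexHull ℝ (range A') ∧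
      IsBalancedRelation A' g := by
  obtain ⟨g, hrel, hg⟩ := Fintype.not_linearIndependent_iff.mp hA
  by_cases htri : ∀ i, 2 * |g i| ≤ ∑ j, |g j|
  · obtain ⟨A', h⟩ := exists_isBalancedRelation_of_two_mul_le (Function.ne_iff.mpr hg) hrel htri
    exact ⟨A', _, h⟩
  · push Not at htri
    exact exists_isBalancedRelation_of_sum_lt hrel htri.choose_spec

/-- The sums `A₁ + A₂`, `A₂ + A₀`, `A₀ + A₁`; they generate the hull of the `±A i` as a zonotope
when the `A i` satisfy a balanced relation. -/
def pairSum (A : Fin 3 → V) (i : Fin 3) : V := ∑ j, A j - A i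

section PairSum

variable {A : Fin 3 → V} {g : Fin 3 → ℝ}

lemma sum_pairSum (A : Fin 3 → V) : ∑ i, pairSum A i = (2 : ℝ) • ∑ i, A i := by
  simp only [pairSum, Fin.sum_univ_three]
  module

lemma mem_zonotope_pairSum (A : Fin 3 → V) (i : Fin 3) : A i ∈ zonotope (pairSum A) := by
  refine mem_zonotope.mpr ⟨fun j => 1 / 2 - Pi.single (M := fun _ => ℝ) i 1 j, fun j => ?_, ?_⟩
  · simp only [Pi.single_apply]
    split_ifs <;> norm_num [abs_of_nonneg]
  · have hsingle : ∑ j, Pi.single (M := fun _ => ℝ) i 1 j • pairSum A j = pairSum A i := by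
      simp [Pi.single_apply, ite_smul]
    simp only [sub_smul, Finset.sum_sub_distrib, ← Finset.smul_sum, sum_pairSum, hsingle]
    rw [pairSum]
    module

lemma zonotope_pairSum_subset {T : Set V} (hT : AbsConvex ℝ T) (hA : ∀ i, A i ∈ T)
    (hsum : ∑ i, A i ∈ T) : zonotope (pairSum A) ⊆ T := by
  have hneg {v : V} : v ∈ T → -v ∈ T := hT.1.neg_mem_iff.mpr
  rw [zonotope_eq_convexHull]
  refine convexHull_min ?_ hT.2
  rintro _ ⟨ε, hε, rfl⟩
  simp only [mem_univ_pi, mem_insert_iff, mem_singleton_iff] at hε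
  rw [Fintype.linearCombination_apply]
  simp only [pairSum, Fin.sum_univ_three] at hsum ⊢
  rcases hε 0 with h0 | h0 <;> rcases hε 1 with h1 | h1 <;> rcases hε 2 with h2 | h2 <;>
    rw [h0, h1, h2]
  · convert hneg hsum using 1
    module
  · convert hneg (hA 2) using 1
    module
  · convert hneg (hA 1) using 1
    module
  · convert hA 0 using 1
    module
  · convert hneg (hA 0) using 1
    module
  · convert hA 1 using 1
    module
  · convert hA 2 using 1
    module
  · convert hsum using 1
    module

lemma sum_sum_sub_two_mul (g : Fin 3 → ℝ) : ∑ i, (∑ j, g j - 2 * g i) = ∑ i, g i := by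
  simp only [Fin.sum_univ_three]
  ring

namespace IsBalancedRelation

lemma sum_sub_two_mul_smul (h : IsBalancedRelation A g) :
    ∑ i, (∑ j, g j - 2 * g i) • A i = (∑ i, g i) • ∑ i, A i := by
  simp [sub_smul, mul_smul, ← Finset.smul_sum, h.sum_smul_eq_zero]

lemma sum_mem_absConvexHull (h : IsBalancedRelation A g) :
    ∑ i, A i ∈ absConvexHull ℝ (range A) := by
  have hmean : ∑ i, A i = (∑ i, g i)⁻¹ • ∑ i, (∑ j, g j - 2 * g i) • A i := by
    rw [h.sum_sub_two_mul_smul, inv_smul_smul₀ h.sum_pos.ne']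
  rw [hmean, Finset.smul_sum]
  simp only [← mul_smul]
  refine convex_absConvexHull.sum_mem (fun i _ => ?_) ?_ fun i _ => mem_absConvexHull_range A i
  · exact mul_nonneg (inv_nonneg.mpr h.sum_pos.le) (sub_nonneg.mpr (h.two_mul_le_sum i))
  · rw [← Finset.mul_sum, sum_sum_sub_two_mul, inv_mul_cancel₀ h.sum_pos.ne']

theorem absConvexHull_eq_zonotope (h : IsBalancedRelation A g) :
    absConvexHull ℝ (range A) = zonotope (pairSum A) :=
  (absConvexHull_min (range_subset_iff.mpr (mem_zonotope_pairSum A))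
    (absConvex_zonotope _)).antisymm
    (zonotope_pairSum_subset absConvex_absConvexHull (mem_absConvexHull_range A)
      h.sum_mem_absConvexHull)

lemma pos_sum_sub_two_mul (h : IsBalancedRelation A g) :
    0 < fun i => ∑ j, g j - 2 * g i := by
  refine lt_of_le_of_ne (fun i => sub_nonneg.mpr (h.two_mul_le_sum i)) fun hzero => ?_
  refine h.sum_pos.ne ?_
  rw [← sum_sum_sub_two_mul, ← hzero]
  simp

lemma sum_sub_two_mul_smul_pairSum (h : IsBalancedRelation A g) :
    ∑ i, (∑ j, g j - 2 * g i) • pairSum A i = 0 := by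
  simp only [pairSum, smul_sub, Finset.sum_sub_distrib (f := fun _ => _ • _), ← Finset.sum_smul]
  rw [sum_sum_sub_two_mul, h.sum_sub_two_mul_smul, sub_self]

end IsBalancedRelation

end PairSum

lemma eq_top_of_not_collinear_of_subset {K E : Type*} [DivisionRing K] [AddCommGroup E] [Module K E]
    [Module.Finite K E] (hE : finrank K E ≤ 2) {S : Set E} {D : Submodule K E}
    (hS : ¬ Collinear K S) (hSD : S ⊆ D) : D = ⊤ := by
  have hvec : vectorSpan K S ≤ D := by
    rw [vectorSpan_def, span_le]
    rintro _ ⟨p, hp, q, hq, rfl⟩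
    exact D.sub_mem (hSD hp) (hSD hq)
  by_contra hD
  have hrank : finrank K D < 2 := (finrank_lt hD).trans_le hE
  exact hS (collinear_iff_finrank_le_one.mpr
    ((Submodule.finrank_mono hvec).trans (Nat.lt_succ_iff.mp hrank)))

lemma exists_eq_absConvexHull {H : Set (Fin 2 → ℝ)} (hH : IsSymmHexagon H ∨ IsParallelogram H) :
    ∃ A : Fin 3 → Fin 2 → ℝ, H = absConvexHull ℝ (range A) := by
  suffices ∃ A : Fin 3 → Fin 2 → ℝ, H = convexHull ℝ (range A ∪ -range A) by
    simpa only [convexHull_union_neg_eq_absConvexHull] using this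
  rcases hH with ⟨A, rfl, -⟩ | ⟨B, B', rfl, -⟩
  · have hrange : range A = {A 0, A 1, A 2} := by
      ext v
      simp [Fin.exists_fin_succ, eq_comm]
    refine ⟨A, ?_⟩
    simp only [hrange, neg_insert, neg_singleton, insert_union, singleton_union]
  · have hrange : range ![B, B', B'] = {B, B'} := by simp [pair_comm]
    refine ⟨![B, B', B'], ?_⟩
    simp only [hrange, neg_insert, neg_singleton, insert_union, singleton_union]

theorem exists_isTiling_absConvexHull {A : Fin 3 → Fin 2 → ℝ}
    (hA : ¬ Collinear ℝ (absConvexHull ℝ (range A))) :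
    ∃ M : Matrix (Fin 2) (Fin 2) ℝ, M.det ≠ 0 ∧
      IsTiling (latticePoints M) (absConvexHull ℝ (range A)) := by
  have hdep : ¬ LinearIndependent ℝ A := fun h => by
    simpa using h.fintype_card_le_finrank
  obtain ⟨A', g, hAA', h⟩ := exists_isBalancedRelation hdep
  rw [hAA', h.absConvexHull_eq_zonotope] at hA ⊢
  have hspan : span ℝ (range (pairSum A')) = ⊤ :=
    eq_top_of_not_collinear_of_subset (by simp) hA (zonotope_subset_span _)
  have hw : ∑ i, (∑ j, g j - 2 * g i) ≠ 0 :=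
    (sum_sum_sub_two_mul g).trans_ne h.sum_pos.ne'
  exact ⟨differenceMatrix (pairSum A'),
    det_differenceMatrix_ne_zero hw h.sum_sub_two_mul_smul_pairSum hspan,
    isTiling_zonotope h.pos_sum_sub_two_mul h.sum_sub_two_mul_smul_pairSum hspan⟩

end Hexagon

/-- Every centrally symmetric convex hexagon or parallelogram `H'` tiles the
plane by a lattice: there is a full-rank lattice of covolume `|H'|` whose
translates of `H'` have pairwise disjoint interiors and cover `ℝ²`;
equivalently `δ_L(H') = 1`. -/
theorem symmHexagon_tiles_plane (H' : Set (Fin 2 → ℝ))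
    (hH : IsSymmHexagon H' ∨ IsParallelogram H') :
    ∃ M : Matrix (Fin 2) (Fin 2) ℝ, M.det ≠ 0 ∧
      covol M = (volume H').toReal ∧
      (∀ l ∈ latticePoints M, ∀ l' ∈ latticePoints M, l ≠ l' →
        Disjoint (interior (l +ᵥ H')) (interior (l' +ᵥ H'))) ∧
      (⋃ l ∈ latticePoints M, l +ᵥ H') = Set.univ := by
  obtain ⟨A, rfl⟩ := exists_eq_absConvexHull hH
  have hncol : ¬ Collinear ℝ (absConvexHull ℝ (range A)) :=
    hH.elim (fun ⟨_, _, h⟩ => h) fun ⟨_, _, _, h⟩ => h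
  obtain ⟨M, hM, htile⟩ := exists_isTiling_absConvexHull hncol
  refine ⟨M, hM, ?_, htile.disjoint_interior, htile.iUnion_vadd⟩
  rw [volume_eq_covol_of_isTiling hM convex_absConvexHull htile]
  exact (ENNReal.toReal_ofReal (abs_nonneg M.det)).symm
end

section
/- Let H' ⊂ ℝ² be a centrally symmetric convex hexagon or a parallelogram and let C ⊆ H' be a centrally symmetric convex body. Then there exists a full-rank lattice Λ ⊂ ℝ² with covol(Λ) ≤ |H'| such that the translates {C + λ : λ ∈ Λ} have pairwise disjoint interiors. (Equivalently, δ_L(C) ≥ |C| / |H'|.) -/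
/-!
It suffices to pack `H'` itself. Among the vertices of `H'` choose two, `P` and `Q`, spanning a
parallelogram of maximal area: by Cramer's rule the third vertex has coordinates at most `1` in
absolute value in the basis `P, Q`. After sign changes, and after replacing a redundant third vertex
by `(P + Q) / 2`, the body `H'` is a linear image of the hexagon with vertices `±e₁`, `±e₂`,
`±(a, b)`, where `0 < a, b ≤ 1 ≤ a + b`.

This hexagon has area `1 + a + b`, which is the covolume of the lattice generated by the sums
`(1 + a, b)` and `(a, 1 + b)` of consecutive vertices. It lies in the slabs
`|b x + (1 - a) y| ≤ b`, `|(1 - b) x + a y| ≤ a`, `|y - x| ≤ 1` bounded by its three pairs of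
opposite sides, and half of a nonzero lattice vector is never strictly inside all three. This is the
packing condition: if `l + u = l' + v` with `u, v` in the interior of a convex body symmetric about
the origin, then `(l - l') / 2 = (v + (-u)) / 2` lies in that interior too.
-/

open MeasureTheory Pointwise

/-- `M` generates a full-rank lattice whose translates of `K` have pairwise
disjoint interiors. -/
def IsLatticePacking {n : ℕ} (M : Matrix (Fin n) (Fin n) ℝ)
    (K : Set (Fin n → ℝ)) : Prop :=
  M.det ≠ 0 ∧ ∀ l ∈ latticePoints M, ∀ l' ∈ latticePoints M, l ≠ l' →
    Disjoint (interior (l +ᵥ K)) (interior (l' +ᵥ K))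

open Set Matrix

namespace IsLatticePacking

variable {n : ℕ} {L M : Matrix (Fin n) (Fin n) ℝ} {K K' : Set (Fin n → ℝ)}

lemma mono (h : IsLatticePacking M K) (hK : K' ⊆ K) : IsLatticePacking M K' :=
  ⟨h.1, fun l hl l' hl' hne => (h.2 l hl l' hl' hne).mono
    (interior_mono (vadd_set_mono hK)) (interior_mono (vadd_set_mono hK))⟩

lemma of_half_smul_notMem_interior (hM : M.det ≠ 0) (hconv : Convex ℝ K) (hsymm : -K = K)
    (h : ∀ l ∈ latticePoints M, l ≠ 0 → (1 / 2 : ℝ) • l ∉ interior K) :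
    IsLatticePacking M K := by
  refine ⟨hM, ?_⟩
  rintro _ ⟨z, rfl⟩ _ ⟨z', rfl⟩ hne
  set l := M *ᵥ fun i => (z i : ℝ)
  set l' := M *ᵥ fun i => (z' i : ℝ)
  have hsub : l - l' ∈ latticePoints M := by
    refine ⟨z - z', ?_⟩
    rw [← mulVec_sub]
    congr 1
    ext i
    simp
  simp only [interior_vadd, disjoint_left]
  rintro _ ⟨x, hx, rfl⟩ ⟨y, hy, hxy⟩
  have hneg : -x ∈ interior K := by
    rw [← hsymm]
    exact (Homeomorph.neg _).preimage_interior K ▸ by simpa using hx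
  have hmid : (1 / 2 : ℝ) • y + (1 / 2 : ℝ) • -x ∈ interior K :=
    hconv.interior hy hneg (by norm_num) (by norm_num) (by norm_num)
  have hdiff : l - l' = y + -x := by
    simp only [vadd_eq_add] at hxy
    rw [← sub_eq_add_neg, sub_eq_sub_iff_add_eq_add, ← hxy, add_comm]
  exact h _ hsub (sub_ne_zero.2 hne) (by rwa [hdiff, smul_add])

lemma image (hL : L.det ≠ 0) (h : IsLatticePacking M K) :
    IsLatticePacking (L * M) (L.toLin' '' K) := by
  obtain ⟨hM, hdisj⟩ := h
  refine ⟨by rw [det_mul]; exact mul_ne_zero hL hM, ?_⟩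
  let e : (Fin n → ℝ) ≃L[ℝ] (Fin n → ℝ) :=
    (LinearEquiv.ofIsUnitDet (f := L.toLin') (v := Pi.basisFun ℝ (Fin n))
      (v' := Pi.basisFun ℝ (Fin n)) (by simpa using hL)).toContinuousLinearEquiv
  have interior_image (l : Fin n → ℝ) :
      interior (L.toLin' l +ᵥ L.toLin' '' K) = e '' interior (l +ᵥ K) := by
    rw [← e.coe_toHomeomorph, e.toHomeomorph.image_interior]
    congr 1
    exact (image_vadd_distrib L.toLin' l K).symm
  have latticePoints_mul {l : Fin n → ℝ} (hl : l ∈ latticePoints (L * M)) :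
      ∃ l₀ ∈ latticePoints M, l = L.toLin' l₀ := by
    obtain ⟨z, rfl⟩ := hl
    exact ⟨_, ⟨z, rfl⟩, by simp⟩
  intro l hl l' hl' hne
  obtain ⟨l₀, hl₀, rfl⟩ := latticePoints_mul hl
  obtain ⟨l₀', hl₀', rfl⟩ := latticePoints_mul hl'
  rw [interior_image, interior_image, disjoint_image_iff e.injective]
  exact hdisj l₀ hl₀ l₀' hl₀' (ne_of_apply_ne _ hne)

end IsLatticePacking

lemma exists_latticePacking_covol_le_volume_image {n : ℕ} {L : Matrix (Fin n) (Fin n) ℝ}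
    {K : Set (Fin n → ℝ)} (hL : L.det ≠ 0)
    (h : ∃ M, IsLatticePacking M K ∧ covol M ≤ (volume K).toReal) :
    ∃ M, IsLatticePacking M (L.toLin' '' K) ∧ covol M ≤ (volume (L.toLin' '' K)).toReal := by
  obtain ⟨M, hpack, hcovol⟩ := h
  refine ⟨L * M, hpack.image hL, ?_⟩
  rw [Measure.addHaar_image_linearMap, LinearMap.det_toLin', ENNReal.toReal_mul,
    ENNReal.toReal_ofReal (abs_nonneg _), covol, det_mul, abs_mul]
  exact mul_le_mul_of_nonneg_left hcovol (abs_nonneg _)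

lemma smul_add_smul_add_smul_mem_of_convex {𝕜 E : Type*} [Field 𝕜] [LinearOrder 𝕜]
    [IsStrictOrderedRing 𝕜] [AddCommGroup E] [Module 𝕜 E] {s : Set E} (hs : Convex 𝕜 s)
    {x y z : E} (hx : x ∈ s) (hy : y ∈ s) (hz : z ∈ s) {a b c : 𝕜} (ha : 0 ≤ a) (hb : 0 ≤ b)
    (hc : 0 ≤ c) (habc : a + b + c = 1) : a • x + b • y + c • z ∈ s := by
  simpa [Fin.sum_univ_three] using hs.sum_mem (t := Finset.univ) (w := ![a, b, c])
    (z := ![x, y, z]) (by simp [Fin.forall_fin_succ, ha, hb, hc])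
    (by simpa [Fin.sum_univ_three] using habc) (by simp [Fin.forall_fin_succ, hx, hy, hz])

section AbsConvexHull

section SeminormedRing

variable {𝕜 E : Type*} [SeminormedRing 𝕜] [PartialOrder 𝕜] [AddCommGroup E] [Module 𝕜 E]

lemma neg_absConvexHull [NormOneClass 𝕜] (s : Set E) : -absConvexHull 𝕜 s = absConvexHull 𝕜 s :=
  balanced_absConvexHull.neg_eq

lemma absConvexHull_eq_of_subset_of_subset {s t : Set E}
    (hst : s ⊆ absConvexHull 𝕜 t) (hts : t ⊆ absConvexHull 𝕜 s) :
    absConvexHull 𝕜 s = absConvexHull 𝕜 t :=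
  (absConvexHull_min hst absConvex_absConvexHull).antisymm
    (absConvexHull_min hts absConvex_absConvexHull)

lemma absConvexHull_insert_neg [NormOneClass 𝕜] (x : E) (s : Set E) :
    absConvexHull 𝕜 (insert (-x) s) = absConvexHull 𝕜 (insert x s) := by
  have subset (z : E) : insert (-z) s ⊆ absConvexHull 𝕜 (insert z s) :=
    insert_subset (balanced_absConvexHull.neg_mem_iff.2 (subset_absConvexHull (mem_insert z s)))
      ((subset_insert z s).trans subset_absConvexHull)
  exact absConvexHull_eq_of_subset_of_subset (subset x) (by simpa using subset (-x))

end SeminormedRing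

variable {E F : Type*} [AddCommGroup E] [Module ℝ E] [AddCommGroup F] [Module ℝ F]
  {s : Set E} {x y : E}

lemma image_absConvexHull (f : E →ₗ[ℝ] F) (s : Set E) :
    f '' absConvexHull ℝ s = absConvexHull ℝ (f '' s) := by
  rw [← convexHull_union_neg_eq_absConvexHull, ← convexHull_union_neg_eq_absConvexHull,
    f.image_convexHull, image_union, image_neg_of_apply_neg_eq_neg fun x _ => map_neg f x]

lemma smul_add_smul_mem_absConvexHull {a b : ℝ} (ha : 0 ≤ a) (hb : 0 ≤ b) (hab : a + b ≤ 1)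
    (hx : x ∈ absConvexHull ℝ s) (hy : y ∈ absConvexHull ℝ s) :
    a • x + b • y ∈ absConvexHull ℝ s := by
  have hzero : (0 : E) ∈ absConvexHull ℝ s := balanced_absConvexHull.zero_mem ⟨x, hx⟩
  simpa using smul_add_smul_add_smul_mem_of_convex convex_absConvexHull hx hy hzero ha hb
    (sub_nonneg.2 hab) (add_sub_cancel _ _)

lemma absConvexHull_pair_smul_add_smul {a b : ℝ} (ha : 0 ≤ a) (hb : 0 ≤ b) (hab : a + b ≤ 1) :
    absConvexHull ℝ {x, y, a • x + b • y} = absConvexHull ℝ {x, y} := by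
  have hx : x ∈ absConvexHull ℝ {x, y} := subset_absConvexHull (by simp)
  have hy : y ∈ absConvexHull ℝ {x, y} := subset_absConvexHull (by simp)
  refine absConvexHull_eq_of_subset_of_subset ?_ (Subset.trans (by grind) subset_absConvexHull)
  rintro z (rfl | rfl | rfl)
  exacts [hx, hy, smul_add_smul_mem_absConvexHull ha hb hab hx hy]

lemma collinear_absConvexHull_of_subset_span_singleton {u : E}
    (hs : s ⊆ Submodule.span ℝ {u}) : Collinear ℝ (absConvexHull ℝ s) := by
  have hspan : AbsConvex ℝ (Submodule.span ℝ {u} : Set E) :=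
    ⟨fun a _ => by
      rintro _ ⟨v, hv, rfl⟩
      exact Submodule.smul_mem _ a hv, Submodule.convex _⟩
  refine (collinear_iff_exists_forall_eq_smul_vadd _).2 ⟨0, u, fun x hx => ?_⟩
  obtain ⟨r, rfl⟩ := Submodule.mem_span_singleton.1 (absConvexHull_min hs hspan hx)
  exact ⟨r, by simp⟩

lemma exists_linearIndependent_pair_of_not_collinear_absConvexHull
    (hs : ¬ Collinear ℝ (absConvexHull ℝ s)) :
    ∃ u ∈ s, ∃ v ∈ s, LinearIndependent ℝ ![u, v] := by
  contrapose! hs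
  by_cases hzero : s ⊆ {0}
  · exact collinear_absConvexHull_of_subset_span_singleton (u := 0) (hzero.trans (by simp))
  obtain ⟨u, hu, hu0⟩ := not_subset.1 hzero
  refine collinear_absConvexHull_of_subset_span_singleton (u := u) fun v hv => ?_
  have hdep := hs u hu v hv
  rw [LinearIndependent.pair_iff' hu0] at hdep
  push Not at hdep
  exact Submodule.mem_span_singleton.2 hdep

lemma isCompact_absConvexHull_of_finite [TopologicalSpace E] [IsTopologicalAddGroup E]
    [ContinuousSMul ℝ E] (hs : s.Finite) : IsCompact (absConvexHull ℝ s) := by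
  rw [← convexHull_union_neg_eq_absConvexHull]
  exact (hs.union hs.neg).isCompact_convexHull ℝ

lemma abs_lt_of_mem_interior_absConvexHull [TopologicalSpace E] [IsTopologicalAddGroup E]
    [ContinuousSMul ℝ E] {f : StrongDual ℝ E} {c : ℝ} (hf : f ≠ 0) (hs : ∀ y ∈ s, |f y| ≤ c)
    (hx : x ∈ interior (absConvexHull ℝ s)) : |f x| < c := by
  have hball : AbsConvex ℝ (f ⁻¹' Metric.closedBall 0 c) :=
    ⟨balanced_closedBall_zero.mulActionHom_preimage (f := (f : E →ₑ[RingHom.id ℝ] ℝ)),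
      (convex_closedBall 0 c).linear_preimage (f : E →ₗ[ℝ] ℝ)⟩
  have hmem := interior_mono (absConvexHull_min (fun y hy => by simpa using hs y hy) hball) hx
  rw [← (f.isOpenMap_of_ne_zero hf).preimage_interior_eq_interior_preimage f.continuous,
    interior_closedBall'] at hmem
  simpa using hmem

end AbsConvexHull

section Area

section Haar

variable {E : Type*} [NormedAddCommGroup E] [NormedSpace ℝ E] [FiniteDimensional ℝ E]
  [MeasurableSpace E] [BorelSpace E] {μ : Measure E} [μ.IsAddHaarMeasure] {f : StrongDual ℝ E}

lemma addHaar_setOf_apply_eq (hf : f ≠ 0) (c : ℝ) : μ {x | f x = c} = 0 := by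
  let p := (AffineSubspace.mk' c (⊥ : Submodule ℝ ℝ)).comap (f : E →ₗ[ℝ] ℝ).toAffineMap
  have hp : (p : Set E) = {x | f x = c} := by
    ext x
    simp [p, AffineSubspace.mem_mk', sub_eq_zero]
  rw [← hp]
  refine μ.addHaar_affineSubspace p fun htop => ?_
  have happly (x : E) : f x = c := by
    have : x ∈ (p : Set E) := by simp [htop]
    rwa [hp] at this
  exact hf (by ext x; rw [happly, ← happly 0, map_zero, _root_.zero_apply])

lemma measure_add_le_measure_union_of_le_of_ge (hf : f ≠ 0) {c : ℝ} {S T : Set E}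
    (hS : S ⊆ {x | f x ≤ c}) (hT : T ⊆ {x | c ≤ f x}) : μ S + μ T ≤ μ (S ∪ T) := by
  have hmeas : MeasurableSet {x | f x < c} :=
    measurableSet_lt f.continuous.measurable measurable_const
  calc μ S + μ T
      = μ (S \ {x | f x = c}) + μ T := by rw [measure_sdiff_null (addHaar_setOf_apply_eq hf c)]
    _ ≤ μ ((S ∪ T) ∩ {x | f x < c}) + μ ((S ∪ T) \ {x | f x < c}) := by
        gcongr
        · exact fun x hx => ⟨.inl hx.1, (hS hx.1).lt_of_ne hx.2⟩
        · exact fun x hx => ⟨.inr hx, fun hlt : f x < c => (hT hx).not_gt hlt⟩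
    _ = μ (S ∪ T) := measure_inter_add_sdiff _ hmeas

lemma measure_mul_two_le_of_neg_eq_self (hf : f ≠ 0) {S K : Set E} (hK : -K = K) (hSK : S ⊆ K)
    (hS : S ⊆ {x | 0 ≤ f x}) : μ S * 2 ≤ μ K :=
  calc μ S * 2
      = μ (-S) + μ S := by rw [Measure.measure_neg, mul_two]
    _ ≤ μ (-S ∪ S) :=
        measure_add_le_measure_union_of_le_of_ge hf (fun x hx => by simpa using hS hx) hS
    _ ≤ μ K := measure_mono (union_subset (hK ▸ neg_subset_neg.2 hSK) hSK)

end Haar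

lemma volume_parallelepiped {n : ℕ} (v : Fin n → Fin n → ℝ) :
    volume (parallelepiped v) = ENNReal.ofReal |(of v).det| := by
  have h := Measure.addHaar_parallelepiped (Pi.basisFun ℝ (Fin n)) v
  rw [Module.Basis.addHaar, Module.Basis.parallelepiped_basisFun, addHaarMeasure_eq_volume_pi,
    Pi.basisFun_det_apply] at h
  exact h

lemma ofReal_abs_det_div_two_le_volume_convexHull (u v w : Fin 2 → ℝ) :
    ENNReal.ofReal (|(of ![v - u, w - u]).det| / 2) ≤ volume (convexHull ℝ {u, v, w}) := by
  set T := convexHull ℝ {u, v, w}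
  have hcomb {a b c : ℝ} (ha : 0 ≤ a) (hb : 0 ≤ b) (hc : 0 ≤ c) (habc : a + b + c = 1) :
      a • u + b • v + c • w ∈ T :=
    smul_add_smul_add_smul_mem_of_convex (convex_convexHull ℝ _)
      (subset_convexHull ℝ _ (by simp)) (subset_convexHull ℝ _ (by simp))
      (subset_convexHull ℝ _ (by simp)) ha hb hc habc
  have hcover : parallelepiped ![v - u, w - u] ⊆ (u + ·) ⁻¹' T ∪ (v + w - u - ·) ⁻¹' T := by
    intro x hx
    obtain ⟨t, ⟨h0, h1⟩, rfl⟩ := (mem_parallelepiped_iff _ _).1 hx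
    simp only [Fin.sum_univ_two, cons_val_zero, cons_val_one]
    rcases le_total (t 0 + t 1) 1 with h | h
    · refine .inl (mem_preimage.2 ?_)
      convert hcomb (sub_nonneg.2 h) (h0 0) (h0 1) (by ring) using 1
      module
    · refine .inr (mem_preimage.2 ?_)
      convert hcomb (sub_nonneg.2 h) (sub_nonneg.2 (h1 0)) (sub_nonneg.2 (h1 1))
        (by simp only [Pi.one_apply]; ring) using 1
      simp only [Pi.one_apply]
      module
  have hnull : NullMeasurableSet T := (convex_convexHull ℝ _).nullMeasurableSet _
  have hle : ENNReal.ofReal |(of ![v - u, w - u]).det| ≤ volume T * 2 := by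
    rw [← volume_parallelepiped]
    refine (measure_mono hcover).trans ((measure_union_le _ _).trans_eq ?_)
    rw [measure_preimage_add, (Measure.measurePreserving_sub_left volume _).measure_preimage hnull,
      mul_two]
  rw [ENNReal.ofReal_div_of_pos two_pos, ENNReal.ofReal_ofNat]
  exact ENNReal.div_le_of_le_mul hle

end Area

/-- Cramer's rule for a choice of basis vectors with maximal determinant. -/
lemma exists_linearIndependent_comp_abs_coeff_le_one {𝕜 ι n : Type*} [Field 𝕜] [LinearOrder 𝕜]
    [IsStrictOrderedRing 𝕜] [Finite ι] [Fintype n] {A : ι → n → 𝕜}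
    (hA : ∃ f : n → ι, LinearIndependent 𝕜 (A ∘ f)) :
    ∃ f : n → ι, LinearIndependent 𝕜 (A ∘ f) ∧
      ∀ i, ∃ c : n → 𝕜, (∀ j, |c j| ≤ 1) ∧ A i = ∑ j, c j • A (f j) := by
  classical
  obtain ⟨g, hg⟩ := hA
  let D (f : n → ι) : 𝕜 := (of (A ∘ f)).det
  have linearIndependent_iff (f : n → ι) : LinearIndependent 𝕜 (A ∘ f) ↔ D f ≠ 0 := by
    rw [← isUnit_iff_ne_zero, ← isUnit_iff_isUnit_det]
    exact linearIndependent_rows_iff_isUnit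
  have : Nonempty (n → ι) := ⟨g⟩
  obtain ⟨f, hmax⟩ := Finite.exists_max fun f => |D f|
  have hD : 0 < |D f| := (abs_pos.2 ((linearIndependent_iff g).1 hg)).trans_le (hmax g)
  have cramer_eq (i : ι) (j : n) : (of (A ∘ f))ᵀ.cramer (A i) j = D (Function.update f j i) := by
    rw [cramer_transpose_apply]
    exact congrArg (det ∘ of) (Function.comp_update A f j i).symm
  refine ⟨f, (linearIndependent_iff f).2 (abs_pos.1 hD), fun i =>
    ⟨fun j => D (Function.update f j i) / D f, fun j => ?_, ?_⟩⟩
  · rw [abs_div]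
    exact div_le_one_of_le₀ (hmax _) (abs_nonneg _)
  · have hcramer := mulVec_cramer (of (A ∘ f))ᵀ (A i)
    rw [det_transpose, mulVec_eq_sum] at hcramer
    rw [← inv_smul_smul₀ (abs_pos.1 hD) (A i), ← hcramer, Finset.smul_sum]
    refine Finset.sum_congr rfl fun j _ => ?_
    rw [cramer_eq]
    ext k
    simp [D, div_eq_inv_mul, mul_assoc]

/-- The symmetric hexagon with vertices `±e₁`, `±e₂`, `±(a, b)`. Up to linear maps every symmetric
hexagon or parallelogram has this form with `0 < a ≤ 1`, `0 < b ≤ 1` and `1 ≤ a + b`. -/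
def stdHexagon (a b : ℝ) : Set (Fin 2 → ℝ) := absConvexHull ℝ {![1, 0], ![0, 1], ![a, b]}

lemma IsParallelogram.isSymmHexagon {H : Set (Fin 2 → ℝ)} (h : IsParallelogram H) :
    IsSymmHexagon H := by
  obtain ⟨B, B', rfl, hcol⟩ := h
  exact ⟨![B, B', B'], by simp [insert_comm B'], hcol⟩

lemma IsSymmHexagon.exists_eq_absConvexHull_range {H : Set (Fin 2 → ℝ)} (h : IsSymmHexagon H) :
    ∃ A : Fin 3 → Fin 2 → ℝ, H = absConvexHull ℝ (range A) ∧ ¬ Collinear ℝ H := by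
  obtain ⟨A, rfl, hcol⟩ := h
  refine ⟨A, ?_, hcol⟩
  rw [← convexHull_union_neg_eq_absConvexHull]
  have hrange : range A = {A 0, A 1, A 2} := by
    ext x
    simp [Fin.exists_fin_succ, eq_comm]
  simp only [hrange, Set.neg_insert, neg_singleton, insert_union, singleton_union]

section NormalForm

variable {P Q : Fin 2 → ℝ} {a b : ℝ}

lemma absConvexHull_eq_image_stdHexagon :
    absConvexHull ℝ {P, Q, a • P + b • Q} = (of ![P, Q])ᵀ.toLin' '' stdHexagon a b := by
  have toLin'_apply (x y : ℝ) : (of ![P, Q])ᵀ.toLin' ![x, y] = x • P + y • Q := by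
    ext i
    simp [mulVec_eq_sum]
  rw [stdHexagon, image_absConvexHull]
  simp only [image_insert_eq, image_singleton, toLin'_apply, one_smul, zero_smul, add_zero,
    zero_add]

lemma exists_absConvexHull_eq_image_stdHexagon (hPQ : LinearIndependent ℝ ![P, Q])
    (ha : |a| ≤ 1) (hb : |b| ≤ 1) :
    ∃ L : Matrix (Fin 2) (Fin 2) ℝ, L.det ≠ 0 ∧ ∃ a' ∈ Ioc (0 : ℝ) 1, ∃ b' ∈ Ioc (0 : ℝ) 1,
      1 ≤ a' + b' ∧ absConvexHull ℝ {P, Q, a • P + b • Q} = L.toLin' '' stdHexagon a' b' := by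
  wlog ha0 : 0 ≤ a generalizing P a
  · have h := this (LinearIndependent.pair_neg_left_iff.2 hPQ) (a := -a) (by rwa [abs_neg])
      (neg_nonneg.2 (le_of_not_ge ha0))
    rwa [neg_smul_neg, absConvexHull_insert_neg] at h
  wlog hb0 : 0 ≤ b generalizing Q b
  · have h := this (b := -b) (by rwa [abs_neg]) (LinearIndependent.pair_neg_right_iff.2 hPQ)
      (neg_nonneg.2 (le_of_not_ge hb0))
    rwa [neg_smul_neg, insert_comm, absConvexHull_insert_neg, insert_comm] at h
  rw [abs_of_nonneg ha0] at ha
  rw [abs_of_nonneg hb0] at hb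
  wlog hab : 0 < a ∧ 0 < b ∧ 1 ≤ a + b generalizing a b
  · rw [absConvexHull_pair_smul_add_smul ha0 hb0 (by grind),
      ← absConvexHull_pair_smul_add_smul (a := 1 / 2) (b := 1 / 2) (by norm_num) (by norm_num)
        (by norm_num)]
    exact this (by norm_num) (by norm_num) (by norm_num) (by norm_num) (by norm_num)
  obtain ⟨ha', hb', hab⟩ := hab
  refine ⟨(of ![P, Q])ᵀ, ?_, a, ⟨ha', ha⟩, b, ⟨hb', hb⟩, hab, absConvexHull_eq_image_stdHexagon⟩
  rw [det_transpose, ← isUnit_iff_ne_zero, ← isUnit_iff_isUnit_det]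
  exact linearIndependent_rows_iff_isUnit.1 hPQ

lemma exists_absConvexHull_range_eq {A : Fin 3 → Fin 2 → ℝ}
    (hA : ¬ Collinear ℝ (absConvexHull ℝ (range A))) :
    ∃ P Q : Fin 2 → ℝ, LinearIndependent ℝ ![P, Q] ∧ ∃ a b : ℝ, |a| ≤ 1 ∧ |b| ≤ 1 ∧
      absConvexHull ℝ (range A) = absConvexHull ℝ {P, Q, a • P + b • Q} := by
  obtain ⟨_, ⟨i, rfl⟩, _, ⟨j, rfl⟩, hij⟩ :=
    exists_linearIndependent_pair_of_not_collinear_absConvexHull hA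
  have comp_eq (f : Fin 2 → Fin 3) : A ∘ f = ![A (f 0), A (f 1)] := by
    ext i
    fin_cases i <;> rfl
  obtain ⟨f, hf, hcoeff⟩ :=
    exists_linearIndependent_comp_abs_coeff_le_one (A := A) ⟨![i, j], by simpa [comp_eq]⟩
  have hne : f 0 ≠ f 1 := hf.injective.of_comp.ne (by decide)
  obtain ⟨k, hk⟩ : ∃ k, ∀ l, l = f 0 ∨ l = f 1 ∨ l = k := by
    revert hne
    generalize f 0 = i
    generalize f 1 = j
    decide +revert
  obtain ⟨c, hc, hAk⟩ := hcoeff k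
  rw [Fin.sum_univ_two] at hAk
  refine ⟨A (f 0), A (f 1), comp_eq f ▸ hf, c 0, c 1, hc 0, hc 1, ?_⟩
  rw [← hAk]
  congr 1
  ext x
  constructor
  · rintro ⟨l, rfl⟩
    rcases hk l with rfl | rfl | rfl <;> simp
  · rintro (rfl | rfl | rfl) <;> simp

lemma IsSymmHexagon.exists_eq_image_stdHexagon {H : Set (Fin 2 → ℝ)} (h : IsSymmHexagon H) :
    ∃ L : Matrix (Fin 2) (Fin 2) ℝ, L.det ≠ 0 ∧ ∃ a ∈ Ioc (0 : ℝ) 1, ∃ b ∈ Ioc (0 : ℝ) 1,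
      1 ≤ a + b ∧ H = L.toLin' '' stdHexagon a b := by
  obtain ⟨A, rfl, hcol⟩ := h.exists_eq_absConvexHull_range
  obtain ⟨P, Q, hPQ, a, b, ha, hb, hA⟩ := exists_absConvexHull_range_eq hcol
  rw [hA]
  exact exists_absConvexHull_eq_image_stdHexagon hPQ ha hb

end NormalForm

/-- The linear functional `(x, y) ↦ p x + q y`; it describes the slabs and half-planes that bound
`stdHexagon a b` and its pieces. -/
def planarForm (p q : ℝ) : StrongDual ℝ (Fin 2 → ℝ) :=
  p • ContinuousLinearMap.proj 0 + q • ContinuousLinearMap.proj 1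

@[simp]
lemma planarForm_apply (p q : ℝ) (x : Fin 2 → ℝ) : planarForm p q x = p * x 0 + q * x 1 := rfl

lemma planarForm_ne_zero {p q : ℝ} (h : p ≠ 0 ∨ q ≠ 0) : planarForm p q ≠ 0 := by
  intro h0
  have hp : p = 0 := by simpa using DFunLike.congr_fun h0 ![1, 0]
  have hq : q = 0 := by simpa using DFunLike.congr_fun h0 ![0, 1]
  exact h.elim (· hp) (· hq)

section StdHexagon

variable {a b : ℝ}

lemma abs_lt_of_mem_interior_stdHexagon {p q c : ℝ} (hpq : p ≠ 0 ∨ q ≠ 0) (hp : |p| ≤ c)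
    (hq : |q| ≤ c) (hab : |p * a + q * b| ≤ c) {x : Fin 2 → ℝ}
    (hx : x ∈ interior (stdHexagon a b)) : |p * x 0 + q * x 1| < c := by
  refine abs_lt_of_mem_interior_absConvexHull (planarForm_ne_zero hpq) ?_ hx
  rintro _ (rfl | rfl | rfl) <;> simpa

lemma eq_zero_and_eq_zero_of_abs_lt (ha : a ∈ Ioc 0 1) (hb : b ∈ Ioc 0 1) {m n : ℤ}
    (h₁ : |2 * b * m + (1 + b - a) * n| < 2 * b) (h₂ : |(1 + a - b) * m + 2 * a * n| < 2 * a)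
    (h₃ : |(1 + b - a) * n - (1 + a - b) * m| < 2) : m = 0 ∧ n = 0 := by
  wlog hm : 0 ≤ m generalizing m n
  · have h := this (m := -m) (n := -n) (by rw [← abs_neg]; convert h₁ using 2; push_cast; ring)
      (by rw [← abs_neg]; convert h₂ using 2; push_cast; ring)
      (by rw [← abs_neg]; convert h₃ using 2; push_cast; ring) (by omega)
    omega
  obtain ⟨ha0, ha1⟩ := ha
  obtain ⟨hb0, hb1⟩ := hb
  rw [abs_lt] at h₁ h₂ h₃
  rcases le_or_gt 0 n with hn | hn
  · constructor
    · by_contra hm0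
      have : (1 : ℝ) ≤ m := by exact_mod_cast (by omega : 1 ≤ m)
      have : (0 : ℝ) ≤ n := by exact_mod_cast hn
      nlinarith
    · by_contra hn0
      have : (0 : ℝ) ≤ m := by exact_mod_cast hm
      have : (1 : ℝ) ≤ n := by exact_mod_cast (by omega : 1 ≤ n)
      nlinarith
  · exfalso
    have : (n : ℝ) ≤ -1 := by exact_mod_cast (by omega : n ≤ -1)
    rcases hm.eq_or_lt with rfl | hm
    · simp only [Int.cast_zero, mul_zero, zero_add] at h₂
      nlinarith
    · have : (1 : ℝ) ≤ m := by exact_mod_cast hm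
      nlinarith

lemma isLatticePacking_stdHexagon (ha : a ∈ Ioc 0 1) (hb : b ∈ Ioc 0 1) (hab : 1 ≤ a + b) :
    IsLatticePacking !![1 + a, a; b, 1 + b] (stdHexagon a b) := by
  have ⟨ha0, ha1⟩ := ha
  have ⟨hb0, hb1⟩ := hb
  have hdet : (!![1 + a, a; b, 1 + b]).det ≠ 0 := by rw [det_fin_two_of]; nlinarith
  refine .of_half_smul_notMem_interior hdet convex_absConvexHull (neg_absConvexHull _) ?_
  rintro _ ⟨z, rfl⟩ hne hmem
  set x := (1 / 2 : ℝ) • !![1 + a, a; b, 1 + b] *ᵥ fun i => (z i : ℝ)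
  have hx0 : x 0 = ((1 + a) * z 0 + a * z 1) / 2 := by
    simp only [x, Pi.smul_apply, mulVec, vec2_dotProduct, of_apply, cons_val, smul_eq_mul]
    ring
  have hx1 : x 1 = (b * z 0 + (1 + b) * z 1) / 2 := by
    simp only [x, Pi.smul_apply, mulVec, vec2_dotProduct, of_apply, cons_val, smul_eq_mul]
    ring
  have h₁ : |b * x 0 + (1 - a) * x 1| < b := by
    refine abs_lt_of_mem_interior_stdHexagon (.inl hb0.ne') ?_ ?_ ?_ hmem <;> grind
  have h₂ : |(1 - b) * x 0 + a * x 1| < a := by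
    refine abs_lt_of_mem_interior_stdHexagon (.inr ha0.ne') ?_ ?_ ?_ hmem <;> grind
  have h₃ : |-1 * x 0 + 1 * x 1| < 1 := by
    refine abs_lt_of_mem_interior_stdHexagon (.inr one_ne_zero) ?_ ?_ ?_ hmem <;> grind
  rw [hx0, hx1] at h₁ h₂ h₃
  have hz : z 0 = 0 ∧ z 1 = 0 :=
    eq_zero_and_eq_zero_of_abs_lt ha hb (by grind) (by grind) (by grind)
  exact hne (by simp [mulVec_eq_sum, hz])

lemma ofReal_le_volume_union_triangles (hab : 1 ≤ a + b) :
    ENNReal.ofReal ((1 + a + b) / 2) ≤ volume (convexHull ℝ {![-1, 0], ![1, 0], ![0, 1]} ∪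
      convexHull ℝ {![1, 0], ![a, b], ![0, 1]} : Set (Fin 2 → ℝ)) := by
  set T : Set (Fin 2 → ℝ) := convexHull ℝ {![-1, 0], ![1, 0], ![0, 1]}
  set T' : Set (Fin 2 → ℝ) := convexHull ℝ {![1, 0], ![a, b], ![0, 1]}
  have hT : ENNReal.ofReal 1 ≤ volume T := by
    convert ofReal_abs_det_div_two_le_volume_convexHull ![-1, 0] ![1, 0] ![0, 1]
    norm_num [det_fin_two]
  have hT' : ENNReal.ofReal ((a + b - 1) / 2) ≤ volume T' := by
    convert ofReal_abs_det_div_two_le_volume_convexHull ![1, 0] ![a, b] ![0, 1] using 3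
    rw [← abs_of_nonneg (sub_nonneg.2 hab), det_fin_two]
    congr 1
    simp only [of_apply, sub_cons, head_cons, tail_cons, cons_val]
    ring
  have hbelow : T ⊆ {x | planarForm 1 1 x ≤ 1} := by
    refine convexHull_min ?_ (convex_halfSpace_le (planarForm 1 1).isLinear 1)
    simp [insert_subset_iff]
  have habove : T' ⊆ {x | 1 ≤ planarForm 1 1 x} := by
    refine convexHull_min ?_ (convex_halfSpace_ge (planarForm 1 1).isLinear 1)
    simp [insert_subset_iff, hab]
  calc ENNReal.ofReal ((1 + a + b) / 2)
      = ENNReal.ofReal 1 + ENNReal.ofReal ((a + b - 1) / 2) := by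
        rw [← ENNReal.ofReal_add zero_le_one (by linarith)]
        ring_nf
    _ ≤ volume T + volume T' := add_le_add hT hT'
    _ ≤ volume (T ∪ T') :=
        measure_add_le_measure_union_of_le_of_ge (planarForm_ne_zero (.inl one_ne_zero))
          hbelow habove

lemma one_add_add_le_volume_stdHexagon (hb : 0 ≤ b) (hab : 1 ≤ a + b) :
    1 + a + b ≤ (volume (stdHexagon a b)).toReal := by
  set U : Set (Fin 2 → ℝ) := convexHull ℝ {![-1, 0], ![1, 0], ![0, 1]} ∪
    convexHull ℝ {![1, 0], ![a, b], ![0, 1]}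
  have hsub : U ⊆ stdHexagon a b := by
    have hvertex : {![1, 0], ![0, 1], ![a, b]} ⊆ stdHexagon a b := subset_absConvexHull
    have hneg : ![-1, 0] ∈ stdHexagon a b := by
      rw [stdHexagon, ← balanced_absConvexHull.neg_mem_iff]
      exact subset_absConvexHull (by simp)
    refine union_subset (convexHull_min ?_ convex_absConvexHull)
      (convexHull_min ?_ convex_absConvexHull) <;>
      grind [stdHexagon]
  have hupper : U ⊆ {x | 0 ≤ planarForm 0 1 x} := by
    have hconv := convex_halfSpace_ge (planarForm 0 1).isLinear 0
    refine union_subset (convexHull_min ?_ hconv) (convexHull_min ?_ hconv) <;>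
      simp [insert_subset_iff, hb]
  have hfinite : volume (stdHexagon a b) ≠ ⊤ :=
    (isCompact_absConvexHull_of_finite (by simp)).measure_ne_top
  rw [← ENNReal.ofReal_le_iff_le_toReal hfinite]
  calc ENNReal.ofReal (1 + a + b)
      = ENNReal.ofReal ((1 + a + b) / 2) * 2 := by
        rw [← ENNReal.ofReal_ofNat 2, ← ENNReal.ofReal_mul (by linarith),
          div_mul_cancel₀ _ two_ne_zero]
    _ ≤ volume U * 2 := mul_le_mul_left (ofReal_le_volume_union_triangles hab) 2
    _ ≤ volume (stdHexagon a b) :=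
        measure_mul_two_le_of_neg_eq_self (planarForm_ne_zero (.inr one_ne_zero))
          (neg_absConvexHull _) hsub hupper

end StdHexagon

theorem exists_latticePacking_covol_le_of_subset_symmHexagon_general {H' C : Set (Fin 2 → ℝ)}
    (hH : IsSymmHexagon H' ∨ IsParallelogram H') (hCH : C ⊆ H') :
    ∃ M : Matrix (Fin 2) (Fin 2) ℝ, IsLatticePacking M C ∧ covol M ≤ (volume H').toReal := by
  suffices ∃ M, IsLatticePacking M H' ∧ covol M ≤ (volume H').toReal by
    obtain ⟨M, hM, hcovol⟩ := this
    exact ⟨M, hM.mono hCH, hcovol⟩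
  obtain ⟨L, hL, a, ha, b, hb, hab, rfl⟩ :=
    (hH.elim id IsParallelogram.isSymmHexagon).exists_eq_image_stdHexagon
  refine exists_latticePacking_covol_le_volume_image hL
    ⟨_, isLatticePacking_stdHexagon ha hb hab, ?_⟩
  calc covol !![1 + a, a; b, 1 + b]
      = |1 + a + b| := by rw [covol, det_fin_two_of]; ring_nf
    _ = 1 + a + b := abs_of_nonneg (by linarith)
    _ ≤ (volume (stdHexagon a b)).toReal := one_add_add_le_volume_stdHexagon hb.1.le hab

/-- If a centrally symmetric planar convex body `C` is contained in a
centrally symmetric convex hexagon or parallelogram `H'`, then `C` admits a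
lattice packing of covolume at most `|H'|`; equivalently
`δ_L(C) ≥ |C| / |H'|`. -/
theorem exists_latticePacking_covol_le_of_subset_symmHexagon
    (H' C : Set (Fin 2 → ℝ))
    (hH : IsSymmHexagon H' ∨ IsParallelogram H')
    (hCcompact : IsCompact C) (hCconv : Convex ℝ C)
    (hCint : (interior C).Nonempty) (hCsymm : C = -C)
    (hCH : C ⊆ H') :
    ∃ M : Matrix (Fin 2) (Fin 2) ℝ, IsLatticePacking M C ∧
      covol M ≤ (volume H').toReal :=
  exists_latticePacking_covol_le_of_subset_symmHexagon_general hH hCH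
end
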